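/- Let α be a finite nonempty type and let m, k be natural numbers. Let p : α^m × α^k → ℝ be a probability mass function on pairs (head, tail), with marginal p₁(u) := ∑_{v ∈ α^k} p(u,v) on α^m and conditional p(v | u) := p(u,v)/p₁(u) defined whenever p₁(u) > 0. Fix a target x* ∈ α^m with p₁(x*) > 0, and let r : α^k → ℝ be any probability mass function on α^k that is absolutely continuous with respect to the conditional p(· | x*). Define the joint pmf Q(u,v) := δ_{x*}(u) · r(v), where δ_{x*} is the one-hot distribution at x*. Then D_KL(Q ‖ p) = − log p₁(x*) + D_KL(r ‖ p(· | x*)). -/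

import Mathlib

/-- Kullback–Leibler divergence between pmfs on a finite type,
summing over the support of `q`. -/
noncomputable def KL {α : Type*} [Fintype α] (q p : α → ℝ) : ℝ :=
  ∑ x ∈ Finset.univ.filter (fun x => 0 < q x), q x * Real.log (q x / p x)

/-!
By the chain rule, the divergence of a joint target from `p` is the divergence of its head from the
marginal of `p`, plus the average over heads of the conditional divergences. For a one-hot head the
first term is the log-loss at the target, and the average retains only the target's term.
-/

theorem KL_eq_sum_univ {α : Type*} [Fintype α] {q : α → ℝ} (hq : ∀ x, 0 ≤ q x) (p : α → ℝ) :
    KL q p = ∑ x, q x * Real.log (q x / p x) := by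
  refine Finset.sum_filter_of_ne fun x _ hx ↦ (hq x).lt_of_ne' ?_
  exact left_ne_zero_of_mul hx

theorem KL_single_one {α : Type*} [Fintype α] [DecidableEq α] (x : α) (p : α → ℝ) :
    KL (Pi.single x 1) p = -Real.log (p x) := by
  have single_nonneg : (0 : α → ℝ) ≤ Pi.single x 1 := Pi.single_nonneg.2 zero_le_one
  rw [KL_eq_sum_univ single_nonneg, Fintype.sum_eq_single x]
  · rw [Pi.single_eq_same, one_mul, one_div, Real.log_inv]
  · intro y hy
    rw [Pi.single_eq_of_ne hy, zero_mul]

theorem mul_mul_log_div_mul {a b s c : ℝ} (hs : a ≠ 0 → s ≠ 0) (hc : a ≠ 0 → b ≠ 0 → c ≠ 0) :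
    a * b * Real.log (a * b / (s * c)) =
      b * (a * Real.log (a / s)) + a * (b * Real.log (b / c)) := by
  rcases eq_or_ne a 0 with rfl | ha
  · simp
  rcases eq_or_ne b 0 with rfl | hb
  · simp
  rw [mul_div_mul_comm, Real.log_mul (div_ne_zero ha (hs ha)) (div_ne_zero hb (hc ha hb))]
  ring

section JointMass

variable {β γ : Type*} [Fintype γ]

/-- The marginal `p₁` on the first component of a joint mass function `p`. -/
def marginalFst (p : β × γ → ℝ) (u : β) : ℝ :=
  ∑ v, p (u, v)

/-- The conditional `p(· | u)` of the second component of a joint mass function `p` given that the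
first one is `u`; it is the zero function, not a mass function, when the marginal vanishes at
`u`. -/
noncomputable def condSnd (p : β × γ → ℝ) (u : β) (v : γ) : ℝ :=
  p (u, v) / marginalFst p u

theorem marginalFst_mul_condSnd {p : β × γ → ℝ} {u : β} (hu : marginalFst p u ≠ 0) (v : γ) :
    marginalFst p u * condSnd p u v = p (u, v) :=
  mul_div_cancel₀ _ hu

variable [Fintype β]

theorem KL_chain_rule {q : β → ℝ} {r : β → γ → ℝ} {p : β × γ → ℝ}
    (hq : ∀ u, 0 ≤ q u) (hr : ∀ u v, 0 ≤ r u v) (hr_sum : ∀ u, ∑ v, r u v = 1)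
    (hqp : ∀ u, 0 < q u → 0 < marginalFst p u)
    (hrp : ∀ u, 0 < q u → ∀ v, 0 < r u v → 0 < condSnd p u v) :
    KL (fun z ↦ q z.1 * r z.1 z.2) p =
      KL q (marginalFst p) + ∑ u, q u * KL (r u) (condSnd p u) := by
  have log_split (u : β) (v : γ) :
      q u * r u v * Real.log (q u * r u v / p (u, v)) =
        r u v * (q u * Real.log (q u / marginalFst p u)) +
          q u * (r u v * Real.log (r u v / condSnd p u v)) := by
    rcases (hq u).eq_or_lt' with hu | hu
    · simp [hu]
    rw [← marginalFst_mul_condSnd (hqp u hu).ne']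
    exact mul_mul_log_div_mul (fun _ ↦ (hqp u hu).ne')
      fun _ hv ↦ (hrp u hu v ((hr u v).lt_of_ne' hv)).ne'
  calc KL (fun z ↦ q z.1 * r z.1 z.2) p
    _ = ∑ u, ∑ v, q u * r u v * Real.log (q u * r u v / p (u, v)) := by
      rw [KL_eq_sum_univ fun z : β × γ ↦ mul_nonneg (hq z.1) (hr z.1 z.2), Fintype.sum_prod_type]
    _ = ∑ u, (q u * Real.log (q u / marginalFst p u) + q u * KL (r u) (condSnd p u)) := by
      simp only [log_split, Finset.sum_add_distrib, ← Finset.sum_mul, ← Finset.mul_sum, hr_sum,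
        one_mul, KL_eq_sum_univ (hr _)]
    _ = KL q (marginalFst p) + ∑ u, q u * KL (r u) (condSnd p u) := by
      rw [Finset.sum_add_distrib, KL_eq_sum_univ hq]

theorem KL_oneHot_head_decomposition_general [DecidableEq β] {p : β × γ → ℝ} {x : β}
    (hx : 0 < marginalFst p x) {r : γ → ℝ} (hr : ∀ v, 0 ≤ r v) (hr_sum : ∑ v, r v = 1)
    (hrp : ∀ v, 0 < r v → 0 < condSnd p x v) :
    KL (fun z ↦ (Pi.single x 1 : β → ℝ) z.1 * r z.2) p =
      -Real.log (marginalFst p x) + KL r (condSnd p x) := by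
  have single_nonneg : (0 : β → ℝ) ≤ Pi.single x 1 := Pi.single_nonneg.2 zero_le_one
  have eq_of_single_pos (u : β) (hu : 0 < (Pi.single x 1 : β → ℝ) u) : u = x := by
    by_contra hne
    exact hu.ne' (Pi.single_eq_of_ne hne 1)
  rw [KL_chain_rule (r := fun _ ↦ r) single_nonneg (fun _ ↦ hr) (fun _ ↦ hr_sum)
    (fun u hu ↦ eq_of_single_pos u hu ▸ hx) (fun u hu ↦ eq_of_single_pos u hu ▸ hrp),
    KL_single_one]
  simp only [Pi.single_apply, ite_mul, one_mul, zero_mul, Finset.sum_ite_eq', Finset.mem_univ,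
    if_true]

end JointMass

theorem KL_oneHot_head_decomposition {α : Type*} [Fintype α] [Nonempty α] [DecidableEq α]
    (m k : ℕ) (p : ((Fin m → α) × (Fin k → α)) → ℝ)
    (hp0 : ∀ z, 0 ≤ p z) (hp1 : ∑ z, p z = 1)
    (xstar : Fin m → α) (hx : 0 < ∑ v, p (xstar, v))
    (r : (Fin k → α) → ℝ) (hr0 : ∀ v, 0 ≤ r v) (hr1 : ∑ v, r v = 1)
    (hac : ∀ v, 0 < r v → 0 < p (xstar, v) / (∑ v', p (xstar, v'))) :
    KL (fun z : (Fin m → α) × (Fin k → α) =>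
          (if z.1 = xstar then (1 : ℝ) else 0) * r z.2) p
      = - Real.log (∑ v, p (xstar, v))
        + KL r (fun v => p (xstar, v) / (∑ v', p (xstar, v'))) := by
  simp only [← Pi.single_apply]
  exact KL_oneHot_head_decomposition_general hx hr0 hr1 hac
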